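/- Let A be a commutative ring and let Ǧ(A) be the set of formal Laurent series g = Σ_{k} g_k x^{k+1} ∈ A((x)) such that g_0 is a unit of A and g_k is nilpotent for all k < 0. Then Ǧ(A) is closed under formal composition of series, and composition makes Ǧ(A) a monoid with identity element x. -/

import Mathlib

/-!
The key point is an intrinsic description of `Ǧ(A)`: a Laurent series `g` lies in `Ǧ(A)` if and only
if it is invertible and there is a constant `c` with `ord (g ^ k) ≥ k - c` for every integer `k`.

If `g ∈ Ǧ(A)`, split `g` into its part `p` in degrees `≥ 1`, which is invertible of order exactly
`1`, and its part in degrees `≤ 0`, which is a finite sum of nilpotents, hence nilpotent. Then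
`g = p (1 + n)` with `n` nilpotent, and the binomial formula bounds the orders of all powers of
`1 + n` from below. Conversely, modulo a prime of `A` the order is additive, so the bound forces
the reduction of `g` to have order `1`; as this holds at every prime, `g ∈ Ǧ(A)`.

The bound makes substitution of `g` a ring endomorphism of `A((x))` which lowers orders by at most
`c`. Such additive maps are determined by their values on monomials, which gives associativity, and
they preserve the bounded-powers condition, which gives closure.
-/

namespace Tate

/-- The set `Ǧ(A)` of invertible nil-Laurent series: Laurent series
`g = Σ_k g_k x^(k+1)` with `g_0` (the coefficient of `x^1`) a unit of `A` and `g_k`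
(the coefficient of `x^(k+1)`, `k < 0`) nilpotent for all `k < 0`. -/
def Gcheck (A : Type*) [CommRing A] : Set (LaurentSeries A) :=
  {g | IsUnit (g.coeff 1) ∧ ∀ n : ℤ, n ≤ 0 → IsNilpotent (g.coeff n)}

/-- Integer powers of a Laurent series, using the inverse in the Laurent series ring
(`Ring.inverse`, which is the genuine inverse for a unit) for negative exponents. -/
noncomputable def lzpow {A : Type*} [CommRing A] (g : LaurentSeries A) (k : ℤ) :
    LaurentSeries A :=
  if 0 ≤ k then g ^ k.toNat else (Ring.inverse g) ^ (-k).toNat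

/-- The coefficient of `x^d` in the formal composite `f ∘ g = Σ_m f_m g^m`
(writing `f = Σ_m f_m x^m`), computed coefficientwise; for `g ∈ Ǧ(A)` only finitely
many terms contribute to each coefficient, by nilpotence. -/
noncomputable def compCoeff {A : Type*} [CommRing A] (f g : LaurentSeries A) (d : ℤ) : A :=
  ∑ᶠ k : ℤ, f.coeff k * (lzpow g k).coeff d

section OrderFiltration

variable {A : Type*} [CommRing A]

/-- The subgroup `x ^ m A[[x]]` of Laurent series of order at least `m`. -/
def orderGE (A : Type*) [CommRing A] (m : ℤ) : AddSubgroup (LaurentSeries A) where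
  carrier := {f | ∀ d < m, f.coeff d = 0}
  zero_mem' := fun _ _ => rfl
  add_mem' := fun hf hg d hd => by rw [HahnSeries.coeff_add, hf d hd, hg d hd, add_zero]
  neg_mem' := fun hf d hd => by rw [HahnSeries.coeff_neg, hf d hd, neg_zero]

lemma mem_orderGE_iff_le_orderTop {m : ℤ} {f : LaurentSeries A} :
    f ∈ orderGE A m ↔ (m : WithTop ℤ) ≤ f.orderTop := by
  simp only [HahnSeries.le_orderTop_iff_forall, WithTop.coe_lt_coe]
  rfl

lemma orderGE_antitone : Antitone (orderGE A) :=
  fun _ _ hmn _ hf d hd => hf d (hd.trans_le hmn)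

lemma mem_orderGE_order (f : LaurentSeries A) : f ∈ orderGE A f.order :=
  fun _ => HahnSeries.coeff_eq_zero_of_lt_order

lemma single_mem_orderGE (k : ℤ) (a : A) : HahnSeries.single k a ∈ orderGE A k :=
  mem_orderGE_iff_le_orderTop.2 HahnSeries.orderTop_single_le

lemma mul_mem_orderGE {m n : ℤ} {f g : LaurentSeries A} (hf : f ∈ orderGE A m)
    (hg : g ∈ orderGE A n) : f * g ∈ orderGE A (m + n) := by
  rw [mem_orderGE_iff_le_orderTop] at *
  exact (add_le_add hf hg).trans HahnSeries.orderTop_add_le_mul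

lemma pow_mem_orderGE {m : ℤ} {f : LaurentSeries A} (hf : f ∈ orderGE A m) (n : ℕ) :
    f ^ n ∈ orderGE A (n * m) := by
  induction n with
  | zero => simpa using single_mem_orderGE 0 (1 : A)
  | succ n ih =>
    rw [pow_succ, Nat.cast_succ, add_one_mul]
    exact mul_mem_orderGE ih hf

lemma zpow_mem_orderGE {m : ℤ} {u : (LaurentSeries A)ˣ} (hu : ↑u ∈ orderGE A m)
    (hu' : ↑u⁻¹ ∈ orderGE A (-m)) (k : ℤ) : ↑(u ^ k) ∈ orderGE A (k * m) := by
  obtain ⟨n, rfl | rfl⟩ := k.eq_nat_or_neg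
  · simpa using pow_mem_orderGE hu n
  · simpa using pow_mem_orderGE hu' n

lemma ofPowerSeries_mem_orderGE (q : PowerSeries A) :
    HahnSeries.ofPowerSeries ℤ A q ∈ orderGE A 0 := by
  intro d hd
  rw [PowerSeries.coeff_coe, if_pos hd]

lemma exists_eq_single_mul_ofPowerSeries {m : ℤ} {f : LaurentSeries A} (hf : f ∈ orderGE A m) :
    ∃ q : PowerSeries A, PowerSeries.constantCoeff q = f.coeff m ∧
      f = HahnSeries.single m 1 * HahnSeries.ofPowerSeries ℤ A q := by
  refine ⟨PowerSeries.mk fun n => f.coeff (m + n), by simp, ?_⟩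
  ext d
  rw [HahnSeries.coeff_single_mul, one_mul, PowerSeries.coeff_coe]
  split_ifs with hd
  · exact hf d (by lia)
  · rw [PowerSeries.coeff_mk]
    congr 1
    lia

lemma exists_unit_of_isUnit_coeff {m : ℤ} {f : LaurentSeries A} (hf : f ∈ orderGE A m)
    (hunit : IsUnit (f.coeff m)) :
    ∃ u : (LaurentSeries A)ˣ, ↑u = f ∧ ↑u⁻¹ ∈ orderGE A (-m) := by
  obtain ⟨q, hq, hfq⟩ := exists_eq_single_mul_ofPowerSeries hf
  obtain ⟨v, rfl⟩ : IsUnit q := PowerSeries.isUnit_iff_constantCoeff.2 (hq ▸ hunit)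
  have hinv : f * (HahnSeries.single (-m) 1 * HahnSeries.ofPowerSeries ℤ A ↑v⁻¹) = 1 := by
    rw [hfq, mul_mul_mul_comm, HahnSeries.single_mul_single, ← map_mul, Units.mul_inv]
    simp
  have hmem := mul_mem_orderGE (single_mem_orderGE (-m) (1 : A)) (ofPowerSeries_mem_orderGE ↑v⁻¹)
  rw [add_zero] at hmem
  exact ⟨Units.mkOfMulEqOne _ _ hinv, rfl, hmem⟩

lemma sub_truncLT_mem_orderGE (m : ℤ) (f : LaurentSeries A) :
    f - HahnSeries.truncLT m f ∈ orderGE A m := by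
  intro d hd
  rw [HahnSeries.coeff_sub, HahnSeries.coeff_truncLT_of_lt hd, sub_self]

lemma truncLT_eq_sum_single (m : ℤ) (f : LaurentSeries A) :
    HahnSeries.truncLT m f = ∑ k ∈ Finset.Ico f.order m, HahnSeries.single k (f.coeff k) := by
  ext d
  have hlow : d < f.order → f.coeff d = 0 := HahnSeries.coeff_eq_zero_of_lt_order
  have hsum : ∑ k ∈ Finset.Ico f.order m, (HahnSeries.single k (f.coeff k)).coeff d =
      if d ∈ Finset.Ico f.order m then f.coeff d else 0 := by
    simp only [HahnSeries.coeff_single]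
    convert Finset.sum_ite_eq _ d f.coeff
  rw [HahnSeries.coeff_truncLT, HahnSeries.coeff_sum, hsum]
  grind

end OrderFiltration

section OrderBounded

variable {A B C : Type*} [CommRing A] [CommRing B] [CommRing C]

/-- Additive maps between Laurent series lowering orders by at most a constant; these are the maps
for which infinite sums of monomials may be evaluated term by term. -/
def IsOrderBounded (Φ : LaurentSeries A →+ LaurentSeries B) : Prop :=
  ∃ c : ℤ, ∀ m, ∀ f ∈ orderGE A m, Φ f ∈ orderGE B (m - c)

namespace IsOrderBounded

lemma sub {Φ Ψ : LaurentSeries A →+ LaurentSeries B} (hΦ : IsOrderBounded Φ)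
    (hΨ : IsOrderBounded Ψ) : IsOrderBounded (Φ - Ψ) := by
  obtain ⟨c, hc⟩ := hΦ
  obtain ⟨e, he⟩ := hΨ
  exact ⟨max c e, fun m f hf => sub_mem (orderGE_antitone (by lia) (hc m f hf))
    (orderGE_antitone (by lia) (he m f hf))⟩

lemma comp {Φ : LaurentSeries B →+ LaurentSeries C} {Ψ : LaurentSeries A →+ LaurentSeries B}
    (hΦ : IsOrderBounded Φ) (hΨ : IsOrderBounded Ψ) : IsOrderBounded (Φ.comp Ψ) := by
  obtain ⟨c, hc⟩ := hΦ
  obtain ⟨e, he⟩ := hΨ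
  exact ⟨e + c, fun m f hf => sub_sub m e c ▸ hc _ _ (he m f hf)⟩

lemma mulLeft (g : LaurentSeries A) : IsOrderBounded (AddMonoidHom.mulLeft g) :=
  ⟨-g.order, fun m _ hf => orderGE_antitone (by lia) (mul_mem_orderGE (mem_orderGE_order g) hf)⟩

lemma mulRight (g : LaurentSeries A) : IsOrderBounded (AddMonoidHom.mulRight g) :=
  ⟨-g.order, fun m _ hf => orderGE_antitone (by lia) (mul_mem_orderGE hf (mem_orderGE_order g))⟩

lemma eq_zero_of_single {Φ : LaurentSeries A →+ LaurentSeries B} (hΦ : IsOrderBounded Φ)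
    (hsingle : ∀ k a, Φ (HahnSeries.single k a) = 0) : Φ = 0 := by
  obtain ⟨c, hc⟩ := hΦ
  ext f d
  have htrunc : Φ (HahnSeries.truncLT (d + 1 + c) f) = 0 := by
    rw [truncLT_eq_sum_single, map_sum]
    exact Finset.sum_eq_zero fun k _ => hsingle k _
  have htail := hc _ _ (sub_truncLT_mem_orderGE (d + 1 + c) f)
  rw [map_sub, htrunc, sub_zero] at htail
  exact htail d (by lia)

lemma ext_single {Φ Ψ : LaurentSeries A →+ LaurentSeries B} (hΦ : IsOrderBounded Φ)
    (hΨ : IsOrderBounded Ψ)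
    (hsingle : ∀ k a, Φ (HahnSeries.single k a) = Ψ (HahnSeries.single k a)) : Φ = Ψ :=
  sub_eq_zero.1 <| (hΦ.sub hΨ).eq_zero_of_single fun k a => by
    rw [AddMonoidHom.sub_apply, hsingle, sub_self]

end IsOrderBounded

/-- The homomorphism `A((x)) → B((x))` applying a ring homomorphism to all coefficients. -/
def mapCoeff (φ : A →+* B) : LaurentSeries A →+* LaurentSeries B where
  toFun f := f.map φ
  map_zero' := HahnSeries.map_zero (φ : ZeroHom A B)
  map_one' := HahnSeries.map_one φ.toMonoidWithZeroHom
  map_add' _ _ := HahnSeries.map_add (φ : A →+ B)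
  map_mul' _ _ := HahnSeries.map_mul (φ : A →ₙ+* B)

lemma coeff_mapCoeff (φ : A →+* B) (f : LaurentSeries A) (d : ℤ) :
    (mapCoeff φ f).coeff d = φ (f.coeff d) := rfl

lemma isOrderBounded_mapCoeff (φ : A →+* B) :
    IsOrderBounded (mapCoeff φ : LaurentSeries A →+ LaurentSeries B) := by
  refine ⟨0, fun m f hf d hd => ?_⟩
  rw [AddMonoidHom.coe_coe, coeff_mapCoeff, hf d (by lia), map_zero]

end OrderBounded

section BoundedPowers

variable {A B : Type*} [CommRing A] [CommRing B]

/-- Invertible Laurent series `u` whose powers satisfy `ord (u ^ k) ≥ k - c` for a constant `c`: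
the series which can be substituted into every Laurent series. -/
def HasBoundedPowers (u : (LaurentSeries A)ˣ) : Prop :=
  ∃ c : ℤ, ∀ k : ℤ, ↑(u ^ k) ∈ orderGE A (k - c)

lemma HasBoundedPowers.map {u : (LaurentSeries A)ˣ} (hu : HasBoundedPowers u)
    {Φ : LaurentSeries A →+* LaurentSeries B}
    (hΦ : IsOrderBounded (Φ : LaurentSeries A →+ LaurentSeries B)) :
    HasBoundedPowers (Units.map (Φ : LaurentSeries A →* LaurentSeries B) u) := by
  obtain ⟨c, hc⟩ := hu
  obtain ⟨e, he⟩ := hΦ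
  refine ⟨c + e, fun k => ?_⟩
  rw [← map_zpow, ← sub_sub]
  exact he _ _ (hc k)

lemma HasBoundedPowers.order_eq_one [IsDomain A] {u : (LaurentSeries A)ˣ}
    (hu : HasBoundedPowers u) : (u : LaurentSeries A).order = 1 := by
  obtain ⟨c, hc⟩ := hu
  have order_inv : (↑u⁻¹ : LaurentSeries A).order = -(u : LaurentSeries A).order := by
    have h := HahnSeries.order_mul u.ne_zero u⁻¹.ne_zero
    rw [Units.mul_inv, HahnSeries.order_one] at h
    lia
  have hpos (n : ℕ) : n - c ≤ n * (u : LaurentSeries A).order := by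
    rw [← nsmul_eq_mul, ← HahnSeries.order_pow,
      HahnSeries.le_order_iff_forall (pow_ne_zero n u.ne_zero)]
    exact fun d hd => by simpa using hc n d hd
  have hneg (n : ℕ) : -n - c ≤ -(n * (u : LaurentSeries A).order) := by
    rw [← mul_neg, ← order_inv, ← nsmul_eq_mul, ← HahnSeries.order_pow,
      HahnSeries.le_order_iff_forall (pow_ne_zero n u⁻¹.ne_zero)]
    exact fun d hd => by simpa using hc (-n) d hd
  have hc_lt : c < c.natAbs + 1 := by lia
  specialize hpos (c.natAbs + 1)
  specialize hneg (c.natAbs + 1)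
  push_cast at hpos hneg hc_lt
  apply le_antisymm <;> by_contra! h <;> nlinarith [abs_nonneg c]

lemma HasBoundedPowers.mem_Gcheck {u : (LaurentSeries A)ˣ} (hu : HasBoundedPowers u) :
    (u : LaurentSeries A) ∈ Gcheck A := by
  have order_mod (p : Ideal A) [p.IsPrime] :
      (mapCoeff (Ideal.Quotient.mk p) (u : LaurentSeries A)).order = 1 :=
    (hu.map (isOrderBounded_mapCoeff (Ideal.Quotient.mk p))).order_eq_one
  constructor
  · by_contra hcoeff
    obtain ⟨p, hp, hmem⟩ := exists_max_ideal_of_mem_nonunits hcoeff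
    have hzero : (mapCoeff (Ideal.Quotient.mk p) (u : LaurentSeries A)).coeff 1 = 0 :=
      Ideal.Quotient.eq_zero_iff_mem.2 hmem
    rw [← order_mod p, HahnSeries.coeff_order_eq_zero] at hzero
    simpa [hzero] using order_mod p
  · intro d hd
    refine nilpotent_iff_mem_prime.2 fun p _ => Ideal.Quotient.eq_zero_iff_mem.1 ?_
    rw [← coeff_mapCoeff]
    exact HahnSeries.coeff_eq_zero_of_lt_order (by rw [order_mod p]; lia)

lemma exists_forall_one_add_pow_mem_orderGE {n : LaurentSeries A} (hn : IsNilpotent n) :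
    ∃ a : ℤ, ∀ k : ℕ, (1 + n) ^ k ∈ orderGE A a := by
  obtain ⟨N, hN⟩ := hn
  obtain ⟨a, ha⟩ := ((Finset.range N).image fun j => (n ^ j).order).bddBelow
  have hpow (j : ℕ) : n ^ j ∈ orderGE A a := by
    rcases lt_or_ge j N with hj | hj
    · exact orderGE_antitone (ha (Finset.mem_image_of_mem _ (Finset.mem_range.2 hj)))
        (mem_orderGE_order (n ^ j))
    · exact pow_eq_zero_of_le hj hN ▸ zero_mem _
  refine ⟨a, fun k => ?_⟩
  rw [add_comm, add_pow]
  refine sum_mem fun j _ => ?_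
  rw [one_pow, mul_one, ← nsmul_eq_mul']
  exact nsmul_mem (hpow j) _

lemma exists_forall_zpow_mem_orderGE {w : (LaurentSeries A)ˣ}
    (hw : IsNilpotent ((w : LaurentSeries A) - 1)) :
    ∃ a : ℤ, ∀ k : ℤ, ↑(w ^ k) ∈ orderGE A a := by
  have hw' : IsNilpotent ((↑w⁻¹ : LaurentSeries A) - 1) := by
    have h : (↑w⁻¹ : LaurentSeries A) - 1 = -↑w⁻¹ * (w - 1) := by
      rw [mul_sub, neg_mul, Units.inv_mul]
      ring
    exact h ▸ (Commute.all _ _).isNilpotent_mul_left hw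
  obtain ⟨a, ha⟩ := exists_forall_one_add_pow_mem_orderGE hw
  obtain ⟨b, hb⟩ := exists_forall_one_add_pow_mem_orderGE hw'
  refine ⟨min a b, fun k => ?_⟩
  obtain ⟨n, rfl | rfl⟩ := k.eq_nat_or_neg
  · exact orderGE_antitone (min_le_left a b) (by simpa using ha n)
  · exact orderGE_antitone (min_le_right a b) (by simpa using hb n)

lemma isNilpotent_truncLT {g : LaurentSeries A} {m : ℤ}
    (hg : ∀ k < m, IsNilpotent (g.coeff k)) : IsNilpotent (HahnSeries.truncLT m g) := by
  rw [truncLT_eq_sum_single]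
  refine isNilpotent_sum fun k hk => ?_
  obtain ⟨N, hN⟩ := hg k (Finset.mem_Ico.1 hk).2
  exact ⟨N, by rw [HahnSeries.single_pow, hN, map_zero]⟩

lemma exists_hasBoundedPowers_of_mem_Gcheck {g : LaurentSeries A} (hg : g ∈ Gcheck A) :
    ∃ u : (LaurentSeries A)ˣ, ↑u = g ∧ HasBoundedPowers u := by
  obtain ⟨hunit, hnil⟩ := hg
  have htrunc : IsNilpotent (HahnSeries.truncLT 1 g) :=
    isNilpotent_truncLT fun k hk => hnil k (by lia)
  have hcoeff : (g - HahnSeries.truncLT 1 g).coeff 1 = g.coeff 1 := by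
    rw [HahnSeries.coeff_sub, HahnSeries.coeff_truncLT_of_le le_rfl, sub_zero]
  have hmem := sub_truncLT_mem_orderGE 1 g
  obtain ⟨p, hp, hp'⟩ := exists_unit_of_isUnit_coeff hmem (hcoeff ▸ hunit)
  have hn : IsNilpotent ((↑p⁻¹ : LaurentSeries A) * HahnSeries.truncLT 1 g) :=
    (Commute.all _ _).isNilpotent_mul_left htrunc
  obtain ⟨w, hw⟩ := hn.isUnit_one_add
  obtain ⟨a, ha⟩ := exists_forall_zpow_mem_orderGE (w := w) (by rwa [hw, add_sub_cancel_left])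
  refine ⟨p * w, ?_, -a, fun k => ?_⟩
  · rw [Units.val_mul, hw, mul_add, mul_one, Units.mul_inv_cancel_left, hp, sub_add_cancel]
  · rw [mul_zpow, Units.val_mul]
    simpa using mul_mem_orderGE (zpow_mem_orderGE (hp ▸ hmem) hp' k) (ha k)

theorem mem_Gcheck_iff {g : LaurentSeries A} :
    g ∈ Gcheck A ↔ ∃ u : (LaurentSeries A)ˣ, ↑u = g ∧ HasBoundedPowers u := by
  refine ⟨exists_hasBoundedPowers_of_mem_Gcheck, ?_⟩
  rintro ⟨u, rfl, hu⟩
  exact hu.mem_Gcheck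

end BoundedPowers

section Substitution

variable {A : Type*} [CommRing A]

lemma lzpow_val (u : (LaurentSeries A)ˣ) (k : ℤ) :
    lzpow (u : LaurentSeries A) k = ↑(u ^ k) := by
  rw [lzpow]
  split_ifs with hk
  · lift k to ℕ using hk
    simp
  · obtain ⟨n, rfl⟩ : ∃ n : ℕ, k = -n := ⟨k.natAbs, by lia⟩
    simp

lemma finite_support_compCoeff {u : (LaurentSeries A)ˣ} (hu : HasBoundedPowers u)
    (f : LaurentSeries A) (d : ℤ) :
    (Function.support fun k => f.coeff k * (lzpow (u : LaurentSeries A) k).coeff d).Finite := by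
  obtain ⟨c, hc⟩ := hu
  refine (Set.finite_Icc f.order (d + c)).subset fun k hk => ?_
  rw [Function.mem_support, lzpow_val] at hk
  constructor <;> by_contra! h
  · exact hk (by rw [mem_orderGE_order f k h, zero_mul])
  · exact hk (by rw [hc k d (by lia), mul_zero])

lemma compCoeff_eq_zero {u : (LaurentSeries A)ˣ} {c : ℤ}
    (hc : ∀ k : ℤ, ↑(u ^ k) ∈ orderGE A (k - c)) {m : ℤ} {f : LaurentSeries A}
    (hf : f ∈ orderGE A m) {d : ℤ} (hd : d < m - c) : compCoeff f u d = 0 := by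
  refine finsum_eq_zero_of_forall_eq_zero fun k => ?_
  rcases lt_or_ge k m with hk | hk
  · rw [hf k hk, zero_mul]
  · rw [lzpow_val, hc k d (by lia), mul_zero]

lemma bddBelow_support_compCoeff {u : (LaurentSeries A)ˣ} (hu : HasBoundedPowers u)
    (f : LaurentSeries A) : BddBelow (Function.support (compCoeff f (u : LaurentSeries A))) := by
  obtain ⟨c, hc⟩ := hu
  exact ⟨f.order - c, fun d hd => le_of_not_gt fun h =>
    hd (compCoeff_eq_zero hc (mem_orderGE_order f) h)⟩

/-- The substitution `f ↦ f ∘ u` as an additive map. -/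
noncomputable def substAddHom {u : (LaurentSeries A)ˣ} (hu : HasBoundedPowers u) :
    LaurentSeries A →+ LaurentSeries A :=
  AddMonoidHom.mk' (fun f => HahnSeries.ofSuppBddBelow _ (bddBelow_support_compCoeff hu f)) <| by
    intro f g
    ext d
    simp only [HahnSeries.coeff_add, HahnSeries.coeff_ofSuppBddBelow, compCoeff, add_mul]
    exact finsum_add_distrib (finite_support_compCoeff hu f d) (finite_support_compCoeff hu g d)

lemma coeff_substAddHom {u : (LaurentSeries A)ˣ} (hu : HasBoundedPowers u) (f : LaurentSeries A)
    (d : ℤ) : (substAddHom hu f).coeff d = compCoeff f u d := rfl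

lemma isOrderBounded_substAddHom {u : (LaurentSeries A)ˣ} (hu : HasBoundedPowers u) :
    IsOrderBounded (substAddHom hu) := by
  obtain ⟨c, hc⟩ := hu
  exact ⟨c, fun _ _ hf _ hd => compCoeff_eq_zero hc hf hd⟩

lemma substAddHom_single {u : (LaurentSeries A)ˣ} (hu : HasBoundedPowers u) (k : ℤ) (a : A) :
    substAddHom hu (HahnSeries.single k a) = HahnSeries.C a * (↑(u ^ k) : LaurentSeries A) := by
  ext d
  rw [coeff_substAddHom, compCoeff, finsum_eq_single _ k, HahnSeries.coeff_single_same, lzpow_val,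
    HahnSeries.C_apply, HahnSeries.coeff_single_zero_mul]
  intro j hj
  rw [HahnSeries.coeff_single_of_ne hj, zero_mul]

lemma substAddHom_single_mul {u : (LaurentSeries A)ˣ} (hu : HasBoundedPowers u) (k : ℤ) (a : A)
    (g : LaurentSeries A) : substAddHom hu (HahnSeries.single k a * g) =
      substAddHom hu (HahnSeries.single k a) * substAddHom hu g := by
  have hbdd := isOrderBounded_substAddHom hu
  refine DFunLike.congr_fun (IsOrderBounded.ext_single (hbdd.comp (.mulLeft _))
    ((IsOrderBounded.mulLeft _).comp hbdd) fun l b => ?_) g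
  simp only [AddMonoidHom.comp_apply, AddMonoidHom.coe_mulLeft, HahnSeries.single_mul_single,
    substAddHom_single, zpow_add, Units.val_mul, map_mul]
  ring

lemma substAddHom_mul {u : (LaurentSeries A)ˣ} (hu : HasBoundedPowers u)
    (f g : LaurentSeries A) : substAddHom hu (f * g) = substAddHom hu f * substAddHom hu g := by
  have hbdd := isOrderBounded_substAddHom hu
  exact DFunLike.congr_fun (IsOrderBounded.ext_single (hbdd.comp (.mulRight _))
    ((IsOrderBounded.mulRight _).comp hbdd) fun k a => substAddHom_single_mul hu k a g) f

/-- The substitution `f ↦ f ∘ u` as a ring endomorphism of `A((x))`. -/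
noncomputable def substHom {u : (LaurentSeries A)ˣ} (hu : HasBoundedPowers u) :
    LaurentSeries A →+* LaurentSeries A where
  __ := substAddHom hu
  map_one' := by simpa using substAddHom_single hu 0 1
  map_mul' := substAddHom_mul hu

lemma coeff_substHom {u : (LaurentSeries A)ˣ} (hu : HasBoundedPowers u) (f : LaurentSeries A)
    (d : ℤ) : (substHom hu f).coeff d = compCoeff f u d := rfl

lemma eq_substHom {u : (LaurentSeries A)ˣ} (hu : HasBoundedPowers u) {f h : LaurentSeries A}
    (hh : ∀ d, h.coeff d = compCoeff f u d) : h = substHom hu f :=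
  HahnSeries.ext (funext hh)

lemma isOrderBounded_substHom {u : (LaurentSeries A)ˣ} (hu : HasBoundedPowers u) :
    IsOrderBounded (substHom hu : LaurentSeries A →+ LaurentSeries A) :=
  isOrderBounded_substAddHom hu

lemma substHom_single {u : (LaurentSeries A)ˣ} (hu : HasBoundedPowers u) (k : ℤ) (a : A) :
    substHom hu (HahnSeries.single k a) = HahnSeries.C a * (↑(u ^ k) : LaurentSeries A) :=
  substAddHom_single hu k a

lemma substHom_mem_Gcheck {u : (LaurentSeries A)ˣ} (hu : HasBoundedPowers u)
    {f : LaurentSeries A} (hf : f ∈ Gcheck A) : substHom hu f ∈ Gcheck A := by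
  obtain ⟨v, rfl, hv⟩ := mem_Gcheck_iff.1 hf
  exact (hv.map (isOrderBounded_substHom hu)).mem_Gcheck

lemma substHom_substHom {u v : (LaurentSeries A)ˣ} (hu : HasBoundedPowers u)
    (hv : HasBoundedPowers v) (f : LaurentSeries A) :
    substHom hv (substHom hu f) = substHom (hu.map (isOrderBounded_substHom hv)) f := by
  refine DFunLike.congr_fun (IsOrderBounded.ext_single
    ((isOrderBounded_substHom hv).comp (isOrderBounded_substHom hu))
    (isOrderBounded_substHom (hu.map (isOrderBounded_substHom hv))) fun k a => ?_) f
  have hC : substHom hv (HahnSeries.C a) = HahnSeries.C a := by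
    simpa using substHom_single hv 0 a
  simp only [AddMonoidHom.comp_apply, AddMonoidHom.coe_coe, substHom_single, map_mul, hC,
    ← map_zpow]
  rfl

theorem compCoeff_assoc {f g h fg gh : LaurentSeries A} (hg : g ∈ Gcheck A) (hh : h ∈ Gcheck A)
    (hfg : ∀ d, fg.coeff d = compCoeff f g d) (hgh : ∀ d, gh.coeff d = compCoeff g h d) (d : ℤ) :
    compCoeff fg h d = compCoeff f gh d := by
  obtain ⟨u, rfl, hu⟩ := mem_Gcheck_iff.1 hg
  obtain ⟨v, rfl, hv⟩ := mem_Gcheck_iff.1 hh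
  obtain rfl := eq_substHom hu hfg
  obtain rfl := eq_substHom hv hgh
  rw [← coeff_substHom hv, substHom_substHom, coeff_substHom]
  rfl

lemma single_one_mem_Gcheck : HahnSeries.single (1 : ℤ) (1 : A) ∈ Gcheck A := by
  refine ⟨by simp, fun n hn => ?_⟩
  rw [HahnSeries.coeff_single_of_ne (by lia)]
  exact IsNilpotent.zero

lemma lzpow_single_one (k : ℤ) :
    lzpow (HahnSeries.single (1 : ℤ) (1 : A)) k = HahnSeries.single k 1 := by
  let x : (LaurentSeries A)ˣ :=
    ⟨HahnSeries.single 1 1, HahnSeries.single (-1) 1, by simp, by simp⟩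
  change lzpow (x : LaurentSeries A) k = _
  rw [lzpow_val]
  obtain ⟨n, rfl | rfl⟩ := k.eq_nat_or_neg
  · simp [x]
  · simp [x]

lemma compCoeff_single_one_right (f : LaurentSeries A) (d : ℤ) :
    compCoeff f (HahnSeries.single (1 : ℤ) (1 : A)) d = f.coeff d := by
  rw [compCoeff, finsum_eq_single _ d, lzpow_single_one, HahnSeries.coeff_single_same, mul_one]
  intro k hk
  rw [lzpow_single_one, HahnSeries.coeff_single_of_ne hk.symm, mul_zero]

lemma compCoeff_single_one_left (g : LaurentSeries A) (d : ℤ) :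
    compCoeff (HahnSeries.single (1 : ℤ) (1 : A)) g d = g.coeff d := by
  rw [compCoeff, finsum_eq_single _ 1, HahnSeries.coeff_single_same, one_mul]
  · simp [lzpow]
  · intro k hk
    rw [HahnSeries.coeff_single_of_ne hk, zero_mul]

end Substitution

theorem Gcheck_monoid_under_composition_general (A : Type*) [CommRing A] :
    (∀ f, ∀ g ∈ Gcheck A, ∃ h : LaurentSeries A,
      (∀ d : ℤ, h.coeff d = compCoeff f g d) ∧ (f ∈ Gcheck A → h ∈ Gcheck A)) ∧
    (∀ f g h fg gh : LaurentSeries A, g ∈ Gcheck A → h ∈ Gcheck A →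
      (∀ d : ℤ, fg.coeff d = compCoeff f g d) → (∀ d : ℤ, gh.coeff d = compCoeff g h d) →
      ∀ d : ℤ, compCoeff fg h d = compCoeff f gh d) ∧
    (HahnSeries.single (1 : ℤ) (1 : A) ∈ Gcheck A) ∧
    (∀ f : LaurentSeries A,
      (∀ d : ℤ, compCoeff f (HahnSeries.single (1 : ℤ) (1 : A)) d = f.coeff d) ∧
      (∀ d : ℤ, compCoeff (HahnSeries.single (1 : ℤ) (1 : A)) f d = f.coeff d)) := by
  refine ⟨fun f g hg => ?_, fun _ _ _ _ _ => compCoeff_assoc, single_one_mem_Gcheck,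
    fun f => ⟨compCoeff_single_one_right f, compCoeff_single_one_left f⟩⟩
  obtain ⟨u, rfl, hu⟩ := mem_Gcheck_iff.1 hg
  exact ⟨substHom hu f, coeff_substHom hu f, substHom_mem_Gcheck hu⟩

/-- `Ǧ(A)` is closed under formal composition of series, and composition makes
`Ǧ(A)` a monoid with identity element `x`. -/
theorem Gcheck_monoid_under_composition (A : Type*) [CommRing A] :
    -- closure: the composite of two elements of `Ǧ(A)` is again a Laurent series in `Ǧ(A)`
    (∀ f ∈ Gcheck A, ∀ g ∈ Gcheck A, ∃ h ∈ Gcheck A, ∀ d : ℤ, h.coeff d = compCoeff f g d) ∧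
    -- associativity of composition
    (∀ f g h fg gh : LaurentSeries A, f ∈ Gcheck A → g ∈ Gcheck A → h ∈ Gcheck A →
      (∀ d : ℤ, fg.coeff d = compCoeff f g d) → (∀ d : ℤ, gh.coeff d = compCoeff g h d) →
      ∀ d : ℤ, compCoeff fg h d = compCoeff f gh d) ∧
    -- the series `x` lies in `Ǧ(A)` and is a two-sided identity for composition
    (HahnSeries.single (1 : ℤ) (1 : A) ∈ Gcheck A) ∧
    (∀ f ∈ Gcheck A,
      (∀ d : ℤ, compCoeff f (HahnSeries.single (1 : ℤ) (1 : A)) d = f.coeff d) ∧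
      (∀ d : ℤ, compCoeff (HahnSeries.single (1 : ℤ) (1 : A)) f d = f.coeff d)) := by
  obtain ⟨hcomp, hassoc, hx, hid⟩ := Gcheck_monoid_under_composition_general A
  exact ⟨fun f hf g hg => (hcomp f g hg).imp fun _ hh => ⟨hh.2 hf, hh.1⟩,
    fun f g h fg gh _ => hassoc f g h fg gh, hx, fun f _ => hid f⟩

end Tate
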